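/- Gaussian averages of monomials with an inverse-power radial weight: let m ≥ 1 and n ≥ 0 be natural numbers, let p be a real number with p < n + m/2, and let μ : {1,...,2n} → {1,...,m} be any assignment of indices. Then the function ξ ↦ e^{−‖ξ‖²}·‖ξ‖^{−2p}·∏_{j=1}^{2n} ξ_{μ(j)} is integrable on ℝ^m and ∫_{ℝ^m} e^{−‖ξ‖²}·‖ξ‖^{−2p}·∏_{j=1}^{2n} ξ_{μ(j)} dξ = π^{m/2} · (Γ(m/2 + n − p)/Γ(m/2 + n)) · (1/(2^{2n} n!)) · Σ_{σ ∈ S_{2n}} ∏_{j=1}^{n} δ_{μ(σ(2j−1)), μ(σ(2j))}, where S_{2n} is the symmetric group on 2n letters and δ is the Kronecker delta. (For p = 0 this gives the standard Gaussian moments ⟨ξ_{μ₁}···ξ_{μ_{2n}}⟩ = ((2n)!/(2^{2n} n!)) δ_{(μ₁μ₂}···δ_{μ_{2n−1}μ_{2n})}.) -/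

import Mathlib

/-!
In polar coordinates `ξ = r u` the integrand splits: the radial factor integrates to a value of the
Gamma function, and `p` enters nowhere else, so only the spherical average of `∏ j, ⟪v j, u⟫` is
left. It is a symmetric multilinear form in `v`, hence by polarization determined by its diagonal,
the spherical average of `⟪v, u⟫ ^ (2 * n)`. The diagonal is found by computing the Gaussian moment
`∫ exp (-‖x‖²) ⟪v, x⟫ ^ (2 * n)` twice: as a product of one-dimensional integrals along an
orthonormal basis containing the direction of `v`, and in polar coordinates.
-/

open MeasureTheory

namespace NLT

open Metric Module Set
open scoped RealInnerProductSpace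

section PolarCoordinates

/-- `P` is positively homogeneous of real degree `s`: such functions split into a radial and a
spherical factor. Only dilation factors `r > 0` are constrained, so `P 0` is arbitrary. -/
def IsPosHomogeneous {E F : Type*} [SMul ℝ E] [SMul ℝ F] (P : E → F) (s : ℝ) : Prop :=
  ∀ ⦃r : ℝ⦄, 0 < r → ∀ x, P (r • x) = r ^ s • P x

lemma isPosHomogeneous_norm_rpow {E : Type*} [SeminormedAddCommGroup E] [NormedSpace ℝ E]
    (s : ℝ) : IsPosHomogeneous (fun x : E => ‖x‖ ^ s) s := fun r hr x => by
  dsimp only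
  rw [norm_smul, Real.norm_of_nonneg hr.le, Real.mul_rpow hr.le (norm_nonneg x), smul_eq_mul]

lemma isPosHomogeneous_prod_inner {ι E : Type*} [Fintype ι] [NormedAddCommGroup E]
    [InnerProductSpace ℝ E] (v : ι → E) :
    IsPosHomogeneous (fun x => ∏ j, ⟪v j, x⟫) (Fintype.card ι) := fun r _ x => by
  simp [real_inner_smul_right, Finset.prod_mul_distrib]

lemma IsPosHomogeneous.smul {E F : Type*} [SMul ℝ E] [MulAction ℝ F] {f : E → ℝ} {P : E → F}
    {s t : ℝ} (hf : IsPosHomogeneous f s) (hP : IsPosHomogeneous P t) :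
    IsPosHomogeneous (fun x => f x • P x) (s + t) := fun r hr x => by
  dsimp only
  rw [hf hr, hP hr, Real.rpow_add hr, smul_smul, smul_smul, smul_eq_mul]
  congr 1
  ring

variable {E F : Type*} [NormedAddCommGroup E] [NormedSpace ℝ E] [FiniteDimensional ℝ E]
  [Nontrivial E] [MeasurableSpace E] [BorelSpace E]
  [NormedAddCommGroup F] [NormedSpace ℝ F] (ν : Measure E) [ν.IsAddHaarMeasure]

omit [Nontrivial E] in
lemma measurableEmbedding_smul_sphere :
    MeasurableEmbedding fun z : sphere (0 : E) 1 × Ioi (0 : ℝ) => z.2.1 • z.1.1 :=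
  (MeasurableEmbedding.subtype_coe (measurableSet_singleton (0 : E)).compl).comp
    (homeomorphUnitSphereProd E).symm.measurableEmbedding

lemma measurePreserving_smul_sphere :
    MeasurePreserving (fun z : sphere (0 : E) 1 × Ioi (0 : ℝ) => z.2.1 • z.1.1)
      (ν.toSphere.prod (.volumeIoiPow (finrank ℝ E - 1))) ν := by
  have coe := measurePreserving_subtype_coe (μa := ν) (measurableSet_singleton (0 : E)).compl
  rw [restrict_compl_singleton] at coe
  exact coe.comp <| ν.measurePreserving_homeomorphUnitSphereProd.symm
    (homeomorphUnitSphereProd E).toMeasurableEquiv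

variable {P : E → F} {s : ℝ} (hP : IsPosHomogeneous P s) (g : ℝ → ℝ)
include hP

omit [FiniteDimensional ℝ E] [Nontrivial E] [MeasurableSpace E] [BorelSpace E] in
lemma IsPosHomogeneous.fun_norm_smul_apply_smul_sphere (r : Ioi (0 : ℝ)) (u : sphere (0 : E) 1) :
    g ‖r.1 • u.1‖ • P (r.1 • u.1) = (g r * r.1 ^ s) • P u := by
  rw [hP r.2, norm_smul, norm_eq_of_mem_sphere, mul_one, Real.norm_of_nonneg r.2.out.le,
    smul_smul]

lemma IsPosHomogeneous.integral_fun_norm_smul_eq_smul_integral_sphere :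
    ∫ x, g ‖x‖ • P x ∂ν
      = (∫ r : Ioi (0 : ℝ), g r * r.1 ^ s ∂.volumeIoiPow (finrank ℝ E - 1))
        • ∫ u : sphere (0 : E) 1, P u ∂ν.toSphere := by
  rw [← (measurePreserving_smul_sphere ν).integral_comp measurableEmbedding_smul_sphere,
    ← integral_prod_smul, ← integral_prod_swap]
  simp only [hP.fun_norm_smul_apply_smul_sphere, Prod.fst_swap, Prod.snd_swap]

lemma IsPosHomogeneous.integral_fun_norm_smul :
    ∫ x, g ‖x‖ • P x ∂ν
      = (∫ x, g ‖x‖ * ‖x‖ ^ s ∂ν) • ⨍ u : sphere (0 : E) 1, P u ∂ν.toSphere := by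
  have radial := (isPosHomogeneous_norm_rpow (E := E) s)
    |>.integral_fun_norm_smul_eq_smul_integral_sphere ν g
  simp only [smul_eq_mul, norm_eq_of_mem_sphere, Real.one_rpow, integral_const, mul_one] at radial
  have : NeZero ν.toSphere := ⟨ν.toSphere_ne_zero⟩
  rw [hP.integral_fun_norm_smul_eq_smul_integral_sphere ν, radial, average_eq, smul_smul, mul_assoc,
    mul_inv_cancel₀ measureReal_univ_ne_zero, mul_one]

lemma IsPosHomogeneous.integrable_fun_norm_smul {g : ℝ → ℝ}
    (hg : Integrable (fun x => g ‖x‖ * ‖x‖ ^ s) ν)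
    (hP_int : Integrable (fun u : sphere (0 : E) 1 => P u) ν.toSphere) :
    Integrable (fun x => g ‖x‖ • P x) ν := by
  rw [← (measurePreserving_smul_sphere ν).integrable_comp_emb
    measurableEmbedding_smul_sphere] at hg ⊢
  have radial : Integrable (fun r : Ioi (0 : ℝ) => g r * r.1 ^ s)
      (.volumeIoiPow (finrank ℝ E - 1)) := by
    refine (Integrable.comp_snd_iff ν.toSphere_ne_zero).1 (hg.congr (.of_forall fun z => ?_))
    simpa using
      (isPosHomogeneous_norm_rpow (E := E) s).fun_norm_smul_apply_smul_sphere g z.2 z.1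
  refine (radial.smul_prod hP_int).swap.congr (.of_forall fun z => ?_)
  exact (hP.fun_norm_smul_apply_smul_sphere g z.2 z.1).symm

end PolarCoordinates

section Radial

variable {E : Type*} [NormedAddCommGroup E] [InnerProductSpace ℝ E] [FiniteDimensional ℝ E]
  [Nontrivial E] [MeasurableSpace E] [BorelSpace E] {s : ℝ}

lemma pow_mul_exp_neg_sq_mul_rpow {r : ℝ} (hr : r ∈ Ioi 0) (d : ℕ) (s : ℝ) :
    r ^ d * (Real.exp (-r ^ 2) * r ^ s) = r ^ (d + s) * Real.exp (-r ^ (2 : ℝ)) := by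
  rw [Real.rpow_add hr, Real.rpow_natCast, Real.rpow_two]
  ring

variable (hs : -finrank ℝ E < s)
include hs

lemma integrable_exp_neg_norm_sq_mul_norm_rpow :
    Integrable fun x : E => Real.exp (-‖x‖ ^ 2) * ‖x‖ ^ s := by
  refine (integrable_fun_norm_addHaar volume
    (f := fun r : ℝ => Real.exp (-r ^ 2) * r ^ s)).2 ?_
  have hd : (↑(finrank ℝ E - 1) : ℝ) = finrank ℝ E - 1 := Nat.cast_pred finrank_pos
  refine (integrableOn_rpow_mul_exp_neg_rpow (by linarith) two_pos).congr_fun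
    (fun r hr => (pow_mul_exp_neg_sq_mul_rpow hr (finrank ℝ E - 1) s).symm) measurableSet_Ioi

lemma integral_exp_neg_norm_sq_mul_norm_rpow :
    ∫ x : E, Real.exp (-‖x‖ ^ 2) * ‖x‖ ^ s
      = Real.pi ^ (finrank ℝ E / 2 : ℝ)
        * (Real.Gamma ((finrank ℝ E + s) / 2) / Real.Gamma (finrank ℝ E / 2)) := by
  have hd : (↑(finrank ℝ E - 1) : ℝ) = finrank ℝ E - 1 := Nat.cast_pred finrank_pos
  have hd0 : (0 : ℝ) < finrank ℝ E := Nat.cast_pos.2 finrank_pos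
  have radial : ∫ r in Ioi (0 : ℝ), r ^ (finrank ℝ E - 1) * (Real.exp (-r ^ 2) * r ^ s)
      = 1 / 2 * Real.Gamma ((finrank ℝ E + s) / 2) := by
    rw [setIntegral_congr_fun measurableSet_Ioi fun r hr => pow_mul_exp_neg_sq_mul_rpow hr _ s,
      integral_rpow_mul_exp_neg_rpow two_pos (by linarith), hd]
    ring_nf
  have ball : volume.real (ball (0 : E) 1)
      = Real.pi ^ (finrank ℝ E / 2 : ℝ) / (finrank ℝ E / 2 * Real.Gamma (finrank ℝ E / 2)) := by
    rw [measureReal_def, InnerProductSpace.volume_ball, ENNReal.ofReal_one, one_pow, one_mul,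
      Real.Gamma_add_one (by positivity), Real.sqrt_eq_rpow,
      ← Real.rpow_mul_natCast Real.pi_nonneg, one_div_mul_eq_div,
      ENNReal.toReal_ofReal (by positivity)]
  rw [integral_fun_norm_addHaar volume fun r : ℝ => Real.exp (-r ^ 2) * r ^ s]
  simp only [smul_eq_mul, nsmul_eq_mul, radial, ball]
  field_simp

end Radial

section Polarization

lemma sum_perm_apply_eq_of_forall_diagonal_eq {𝕜 E F : Type*} [NontriviallyNormedField 𝕜]
    [NormedAddCommGroup E] [NormedSpace 𝕜 E] [NormedAddCommGroup F] [NormedSpace 𝕜 F] {N : ℕ}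
    {f g : E [×N]→L[𝕜] F} (h : ∀ x, f (fun _ => x) = g fun _ => x) (v : Fin N → E) :
    ∑ σ : Equiv.Perm (Fin N), f (v ∘ σ) = ∑ σ : Equiv.Perm (Fin N), g (v ∘ σ) := by
  have := f.iteratedFDeriv_comp_diagonal 0 v
  rw [funext h, g.iteratedFDeriv_comp_diagonal 0 v] at this
  exact this.symm

variable {E : Type*} [NormedAddCommGroup E] [InnerProductSpace ℝ E]

/-- The multilinear form `v ↦ ∏ j, ⟪v j, x⟫`, bundled as a continuous multilinear map so that it can
be averaged over `x` as a whole. -/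
noncomputable def innerProd (N : ℕ) (x : E) : E [×N]→L[ℝ] ℝ :=
  (ContinuousMultilinearMap.mkPiAlgebra ℝ (Fin N) ℝ).compContinuousLinearMap fun _ => innerSL ℝ x

lemma innerProd_apply (N : ℕ) (x : E) (v : Fin N → E) : innerProd N x v = ∏ j, ⟪v j, x⟫ := by
  simp [innerProd, real_inner_comm]

@[fun_prop]
lemma continuous_innerProd (N : ℕ) : Continuous (innerProd N : E → E [×N]→L[ℝ] ℝ) :=
  ((ContinuousMultilinearMap.mkPiAlgebra ℝ (Fin N) ℝ).compContinuousLinearMapLRight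
    (E := fun _ => E)).cont.comp (by fun_prop : Continuous fun (x : E) (_ : Fin N) => innerSL ℝ x)

/-- The splitting of `2 * n` indices into `n` pairs of consecutive ones. -/
def consecutivePairs (n : ℕ) : (Σ _ : Fin n, Fin 2) ≃ Fin (2 * n) :=
  (Equiv.sigmaEquivProd (Fin n) (Fin 2)).trans
    (finProdFinEquiv.trans (finCongr (mul_comm n 2)))

lemma consecutivePairs_apply {n : ℕ} (j : Fin n) (k : Fin 2) :
    consecutivePairs n ⟨j, k⟩ = ⟨2 * j + k, by lia⟩ := by
  ext
  simp [consecutivePairs, finProdFinEquiv, add_comm]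

/-- The multilinear form `v ↦ ⟪v 0, v 1⟫ ⟪v 2, v 3⟫ ⋯ ⟪v (2n-2), v (2n-1)⟫`, whose symmetrization
is the sum over pairings in Wick's formula. -/
noncomputable def innerPairing (n : ℕ) : E [×2 * n]→L[ℝ] ℝ where
  toMultilinearMap := MultilinearMap.domDomCongr (consecutivePairs n)
    ((MultilinearMap.mkPiAlgebra ℝ (Fin n) ℝ).compMultilinearMap fun _ =>
      ((innerSL ℝ).uncurryBilinear.compContinuousLinearMap fun _ =>
        (ContinuousLinearMap.id ℝ E).prod (ContinuousLinearMap.id ℝ E)).toMultilinearMap)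
  cont := by
    change Continuous fun v : Fin (2 * n) → E =>
      ∏ j, ⟪v (consecutivePairs n ⟨j, 0⟩), v (consecutivePairs n ⟨j, 1⟩)⟫
    fun_prop

lemma innerPairing_apply (n : ℕ) (v : Fin (2 * n) → E) :
    innerPairing n v = ∏ j : Fin n, ⟪v ⟨2 * j, by lia⟩, v ⟨2 * j + 1, by lia⟩⟫ := by
  change ∏ j, ⟪v (consecutivePairs n ⟨j, 0⟩), v (consecutivePairs n ⟨j, 1⟩)⟫ = _
  simp [consecutivePairs_apply]

lemma innerPairing_diagonal (n : ℕ) (x : E) : innerPairing n (fun _ => x) = ‖x‖ ^ (2 * n) := by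
  simp [innerPairing_apply, pow_mul]

end Polarization

section GaussianLinearForm

variable {E : Type*} [NormedAddCommGroup E] [InnerProductSpace ℝ E] [FiniteDimensional ℝ E]

lemma Gamma_nat_add_half_eq_factorial (n : ℕ) :
    Real.Gamma (n + 1 / 2) = √Real.pi * ((2 * n).factorial / (2 ^ (2 * n) * n.factorial)) := by
  have duplication := Real.Gamma_mul_Gamma_add_half (n + 1 / 2)
  rw [show (n + 1 / 2 + 1 / 2 : ℝ) = n + 1 by ring, Real.Gamma_nat_eq_factorial,
    show (2 * (n + 1 / 2) : ℝ) = ↑(2 * n) + 1 by push_cast; ring, Real.Gamma_nat_eq_factorial,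
    show (1 - (↑(2 * n) + 1) : ℝ) = -↑(2 * n) by ring, Real.rpow_neg two_pos.le,
    Real.rpow_natCast] at duplication
  have := n.factorial_ne_zero
  field_simp at duplication ⊢
  linarith

lemma integral_exp_neg_sq_mul_pow (n : ℕ) :
    ∫ x : ℝ, Real.exp (-x ^ 2) * x ^ (2 * n)
      = √Real.pi * ((2 * n).factorial / (2 ^ (2 * n) * n.factorial)) := by
  have radial := integral_exp_neg_norm_sq_mul_norm_rpow (E := ℝ) (s := ↑(2 * n))
    (by rw [finrank_self, Nat.cast_one]; linarith [(2 * n).cast_nonneg (α := ℝ)])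
  simp only [Real.norm_eq_abs, sq_abs, Real.rpow_natCast, (even_two_mul n).pow_abs, finrank_self,
    Nat.cast_one] at radial
  rw [radial, show ((1 + ↑(2 * n)) / 2 : ℝ) = n + 1 / 2 by push_cast; ring,
    Gamma_nat_add_half_eq_factorial, Real.Gamma_one_half_eq, ← Real.sqrt_eq_rpow]
  field_simp

lemma exists_orthonormalBasis_norm_smul_eq [Nontrivial E] (v : E) :
    ∃ (b : OrthonormalBasis (Fin (finrank ℝ E)) ℝ E) (i : Fin (finrank ℝ E)), ‖v‖ • b i = v := by
  let i : Fin (finrank ℝ E) := ⟨0, finrank_pos⟩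
  obtain rfl | hv := eq_or_ne v 0
  · exact ⟨stdOrthonormalBasis ℝ E, i, by simp⟩
  have unit : ‖‖v‖⁻¹ • v‖ = 1 := norm_smul_inv_norm hv
  obtain ⟨b, hb⟩ := Orthonormal.exists_orthonormalBasis_extension_of_card_eq (𝕜 := ℝ)
    (ι := Fin (finrank ℝ E)) (by simp) (v := fun _ => ‖v‖⁻¹ • v) (s := {i})
    ⟨fun _ => unit, fun j k hjk => (hjk (Subsingleton.elim j k)).elim⟩
  exact ⟨b, i, by rw [hb i rfl, smul_inv_smul₀ (norm_ne_zero_iff.2 hv)]⟩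

variable [MeasurableSpace E] [BorelSpace E]

lemma integral_prod_repr {ι 𝕜 : Type*} [Fintype ι] [RCLike 𝕜] (b : OrthonormalBasis ι ℝ E)
    (f : ι → ℝ → 𝕜) : ∫ x, ∏ i, f i (b.repr x i) = ∏ i, ∫ t, f i t := by
  rw [b.measurePreserving_repr.integral_comp b.measurableEquiv.measurableEmbedding
      (fun y : EuclideanSpace ℝ ι => ∏ i, f i (y i)),
    (PiLp.volume_preserving_ofLp ι).integral_comp
      (MeasurableEquiv.toLp 2 (ι → ℝ)).symm.measurableEmbedding (fun y => ∏ i, f i (y i)),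
    integral_fintype_prod_volume_eq_prod]

lemma integral_exp_neg_norm_sq_mul_prod_repr_pow {ι : Type*} [Fintype ι]
    (b : OrthonormalBasis ι ℝ E) (α : ι → ℕ) :
    ∫ x, Real.exp (-‖x‖ ^ 2) * ∏ i, b.repr x i ^ (2 * α i)
      = Real.pi ^ (finrank ℝ E / 2 : ℝ)
        * ∏ i, ((2 * α i).factorial / (2 ^ (2 * α i) * (α i).factorial) : ℝ) := by
  have factor (x : E) : Real.exp (-‖x‖ ^ 2) * ∏ i, b.repr x i ^ (2 * α i)
      = ∏ i, Real.exp (-b.repr x i ^ 2) * b.repr x i ^ (2 * α i) := by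
    rw [Finset.prod_mul_distrib, ← Real.exp_sum, Finset.sum_neg_distrib,
      ← EuclideanSpace.real_norm_sq_eq, b.repr.norm_map]
  simp only [factor]
  rw [integral_prod_repr b fun i t => Real.exp (-t ^ 2) * t ^ (2 * α i)]
  simp only [integral_exp_neg_sq_mul_pow, Finset.prod_mul_distrib, Finset.prod_const,
    Finset.card_univ, finrank_eq_card_basis b.toBasis]
  rw [Real.sqrt_eq_rpow, ← Real.rpow_mul_natCast Real.pi_nonneg, one_div_mul_eq_div]

lemma integral_exp_neg_norm_sq_mul_inner_pow [Nontrivial E] (v : E) (n : ℕ) :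
    ∫ x, Real.exp (-‖x‖ ^ 2) * ⟪v, x⟫ ^ (2 * n)
      = Real.pi ^ (finrank ℝ E / 2 : ℝ)
        * ((2 * n).factorial / (2 ^ (2 * n) * n.factorial)) * ‖v‖ ^ (2 * n) := by
  obtain ⟨b, i, hv⟩ := exists_orthonormalBasis_norm_smul_eq v
  have coordinate (x : E) : Real.exp (-‖x‖ ^ 2) * ⟪v, x⟫ ^ (2 * n)
      = Real.exp (-‖x‖ ^ 2) * (∏ k, b.repr x k ^ (2 * Pi.single i n k)) * ‖v‖ ^ (2 * n) := by
    rw [Fintype.prod_eq_single i fun k hk => by simp [hk], Pi.single_eq_same, b.repr_apply_apply,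
      mul_assoc, ← mul_pow, mul_comm _ ‖v‖, ← real_inner_smul_left, hv]
  simp only [coordinate]
  rw [integral_mul_const, integral_exp_neg_norm_sq_mul_prod_repr_pow,
    Fintype.prod_eq_single i fun k hk => by simp [hk], Pi.single_eq_same]

end GaussianLinearForm

section Sphere

variable {E : Type*} [NormedAddCommGroup E] [InnerProductSpace ℝ E] [FiniteDimensional ℝ E]
  [Nontrivial E] [MeasurableSpace E] [BorelSpace E]

lemma average_sphere_inner_pow (v : E) (n : ℕ) :
    ⨍ u : sphere (0 : E) 1, ⟪v, u⟫ ^ (2 * n) ∂volume.toSphere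
      = Real.Gamma (finrank ℝ E / 2) / Real.Gamma (finrank ℝ E / 2 + n)
        * ((2 * n).factorial / (2 ^ (2 * n) * n.factorial)) * ‖v‖ ^ (2 * n) := by
  have polar := (isPosHomogeneous_prod_inner fun _ : Fin (2 * n) => v)
    |>.integral_fun_norm_smul volume fun r => Real.exp (-r ^ 2)
  have hd : (0 : ℝ) < finrank ℝ E := Nat.cast_pos.2 finrank_pos
  simp only [Finset.prod_const, Finset.card_univ, Fintype.card_fin, smul_eq_mul] at polar
  rw [integral_exp_neg_norm_sq_mul_inner_pow,
    integral_exp_neg_norm_sq_mul_norm_rpow (by linarith [(2 * n).cast_nonneg (α := ℝ)]),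
    show ((finrank ℝ E + ↑(2 * n)) / 2 : ℝ) = finrank ℝ E / 2 + n by push_cast; ring] at polar
  have : (0 : ℝ) < Real.Gamma (finrank ℝ E / 2) := Real.Gamma_pos_of_pos (by positivity)
  have : (0 : ℝ) < Real.Gamma (finrank ℝ E / 2 + n) := Real.Gamma_pos_of_pos (by positivity)
  field_simp at polar ⊢
  linarith

lemma average_sphere_prod_inner (n : ℕ) (v : Fin (2 * n) → E) :
    ⨍ u : sphere (0 : E) 1, ∏ j, ⟪v j, u⟫ ∂volume.toSphere
      = Real.Gamma (finrank ℝ E / 2) / Real.Gamma (finrank ℝ E / 2 + n)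
        * (1 / (2 ^ (2 * n) * n.factorial))
        * ∑ σ : Equiv.Perm (Fin (2 * n)), innerPairing n (v ∘ σ) := by
  let moment : E [×2 * n]→L[ℝ] ℝ :=
    ⨍ u : sphere (0 : E) 1, innerProd (2 * n) u.1 ∂volume.toSphere
  have moment_apply (w : Fin (2 * n) → E) :
      moment w = ⨍ u : sphere (0 : E) 1, ∏ j, ⟪w j, u⟫ ∂volume.toSphere := by
    simp only [← innerProd_apply]
    exact ContinuousMultilinearMap.integral_apply
      (Continuous.integrable_of_hasCompactSupport (by fun_prop) (.of_compactSpace _)) w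
  have diagonal (x : E) : moment (fun _ => x)
      = ((Real.Gamma (finrank ℝ E / 2) / Real.Gamma (finrank ℝ E / 2 + n)
        * ((2 * n).factorial / (2 ^ (2 * n) * n.factorial)) : ℝ) • innerPairing n) fun _ => x := by
    simp [moment_apply, average_sphere_inner_pow, innerPairing_diagonal]
  have polarized := sum_perm_apply_eq_of_forall_diagonal_eq diagonal v
  have symmetric (σ : Equiv.Perm (Fin (2 * n))) : moment (v ∘ σ) = moment v := by
    simp only [moment_apply, Function.comp_apply,
      fun u : sphere (0 : E) 1 => Equiv.prod_comp σ fun j => ⟪v j, u.1⟫]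
  simp only [symmetric, Finset.sum_const, Finset.card_univ, Fintype.card_perm, Fintype.card_fin,
    nsmul_eq_mul, smul_apply, smul_eq_mul, ← Finset.mul_sum] at polarized
  have := (2 * n).factorial_ne_zero
  rw [← moment_apply, ← mul_right_inj' (Nat.cast_ne_zero.2 this : ((2 * n).factorial : ℝ) ≠ 0),
    polarized]
  ring

end Sphere

theorem gaussian_moments_general {E : Type*} [NormedAddCommGroup E] [InnerProductSpace ℝ E]
    [FiniteDimensional ℝ E] [Nontrivial E] [MeasurableSpace E] [BorelSpace E] (n : ℕ) (p : ℝ)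
    (hp : p < n + finrank ℝ E / 2) (v : Fin (2 * n) → E) :
    Integrable (fun x => Real.exp (-‖x‖ ^ 2) * ‖x‖ ^ (-(2 * p)) * ∏ j, ⟪v j, x⟫) ∧
    ∫ x, Real.exp (-‖x‖ ^ 2) * ‖x‖ ^ (-(2 * p)) * ∏ j, ⟪v j, x⟫
      = Real.pi ^ (finrank ℝ E / 2 : ℝ)
        * (Real.Gamma (finrank ℝ E / 2 + n - p) / Real.Gamma (finrank ℝ E / 2 + n))
        * (1 / (2 ^ (2 * n) * n.factorial))
        * ∑ σ : Equiv.Perm (Fin (2 * n)), ∏ j : Fin n,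
            ⟪v (σ ⟨2 * j, by lia⟩), v (σ ⟨2 * j + 1, by lia⟩)⟫ := by
  have homogeneous : IsPosHomogeneous (fun x => ‖x‖ ^ (-(2 * p)) * ∏ j, ⟪v j, x⟫)
      (-(2 * p) + ↑(2 * n)) := by
    simpa using (isPosHomogeneous_norm_rpow _).smul (isPosHomogeneous_prod_inner v)
  have hs : -finrank ℝ E < -(2 * p) + ↑(2 * n) := by push_cast; linarith
  simp only [mul_assoc]
  refine ⟨homogeneous.integrable_fun_norm_smul volume (g := fun r => Real.exp (-r ^ 2))
    (integrable_exp_neg_norm_sq_mul_norm_rpow hs)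
    (Continuous.integrable_of_hasCompactSupport ?_ (.of_compactSpace _)), ?_⟩
  · simp only [norm_eq_of_mem_sphere, Real.one_rpow, one_mul]
    fun_prop
  · have polar := homogeneous.integral_fun_norm_smul volume fun r => Real.exp (-r ^ 2)
    simp only [norm_eq_of_mem_sphere, Real.one_rpow, one_mul, smul_eq_mul] at polar
    have := Real.Gamma_pos_of_pos (s := finrank ℝ E / 2)
      (half_pos (Nat.cast_pos.2 finrank_pos))
    rw [polar, integral_exp_neg_norm_sq_mul_norm_rpow hs, average_sphere_prod_inner,
      show ((finrank ℝ E + (-(2 * p) + ↑(2 * n))) / 2 : ℝ) = finrank ℝ E / 2 + n - p by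
        push_cast; ring]
    simp only [innerPairing_apply, Function.comp_apply]
    field_simp

/-- Gaussian averages of monomials with an inverse-power radial weight: for `p < n + m/2`,
`∫_{ℝ^m} e^{−‖ξ‖²} ‖ξ‖^{−2p} ξ_{μ₁}⋯ξ_{μ_{2n}} dξ
  = π^{m/2} (Γ(m/2+n−p)/Γ(m/2+n)) (1/(2^{2n} n!)) ∑_{σ ∈ S_{2n}} ∏ⱼ δ_{μ_{σ(2j−1)} μ_{σ(2j)}}`. -/
theorem gaussian_moments (m n : ℕ) (hm : 1 ≤ m) (p : ℝ) (hp : p < (n : ℝ) + (m : ℝ) / 2)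
    (μ : Fin (2 * n) → Fin m) :
    Integrable (fun ξ : EuclideanSpace ℝ (Fin m) =>
      Real.exp (-‖ξ‖ ^ 2) * ‖ξ‖ ^ (-(2 * p)) * ∏ j : Fin (2 * n), ξ (μ j)) ∧
    ∫ ξ : EuclideanSpace ℝ (Fin m),
        Real.exp (-‖ξ‖ ^ 2) * ‖ξ‖ ^ (-(2 * p)) * ∏ j : Fin (2 * n), ξ (μ j)
      = Real.pi ^ ((m : ℝ) / 2)
        * (Real.Gamma ((m : ℝ) / 2 + n - p) / Real.Gamma ((m : ℝ) / 2 + n))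
        * (1 / (2 ^ (2 * n) * (Nat.factorial n : ℝ)))
        * ∑ σ : Equiv.Perm (Fin (2 * n)), ∏ j : Fin n,
            (if μ (σ ⟨2 * (j : ℕ), by have := j.isLt; omega⟩)
                = μ (σ ⟨2 * (j : ℕ) + 1, by have := j.isLt; omega⟩)
              then (1 : ℝ) else 0) := by
  have : Nonempty (Fin m) := ⟨⟨0, hm⟩⟩
  simpa [EuclideanSpace.inner_single_left, Pi.single_apply] using
    gaussian_moments_general n p (by simpa using hp) fun j => EuclideanSpace.single (μ j) (1 : ℝ)

end NLT
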